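/- Let F be a free group with a fixed free generating set and its Magnus order. If Φ is an automorphism of F inducing the identity on the abelianization F/[F,F], then Φ preserves the Magnus order: a < b implies Φ(a) < Φ(b). -/

import Mathlib

/-! Noncommutative formal power series over `ℤ` in indeterminates indexed by `I`
are modelled as coefficient functions on words (`List I`). -/

/-- Convolution (Cauchy) product of noncommutative power series. -/
def conv {I : Type*} (f g : List I → ℤ) : List I → ℤ :=
  fun w => ∑ k ∈ Finset.range (w.length + 1), f (w.take k) * g (w.drop k)

/-- The power series `1`. -/
def oneSeries {I : Type*} : List I → ℤ := fun w => match w with | [] => 1 | _ => 0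

/-- The power series `1 + X_i`, the Magnus expansion of the generator `x_i`. -/
def genSeries {I : Type*} [DecidableEq I] (i : I) : List I → ℤ :=
  fun w => if w = [] ∨ w = [i] then 1 else 0

/-- The power series `1 - X_i + X_i² - ⋯`, the Magnus expansion of `x_i⁻¹`. -/
def invGenSeries {I : Type*} [DecidableEq I] (i : I) : List I → ℤ :=
  fun w => if w = List.replicate w.length i then (-1) ^ w.length else 0

/-- The expansion of a single letter of a reduced word. -/
def letterSeries {I : Type*} [DecidableEq I] (p : I × Bool) : List I → ℤ :=
  if p.2 then genSeries p.1 else invGenSeries p.1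

/-- The Magnus expansion of an element of the free group on `I`. -/
def magnus {I : Type*} [DecidableEq I] (a : FreeGroup I) : List I → ℤ :=
  ((FreeGroup.toWord a).map letterSeries).foldr conv oneSeries

/-- Order on monomials (words): first by total degree (length), then lexicographically. -/
def monLt {I : Type*} [LinearOrder I] (w v : List I) : Prop :=
  w.length < v.length ∨ (w.length = v.length ∧ List.Lex (· < ·) w v)

/-- `f ≺ g` iff the coefficient of the smallest monomial where `f` and `g` differ
is larger in `g` (i.e. the lowest nonzero coefficient of `g - f` is positive). -/
def seriesLt {I : Type*} [LinearOrder I] (f g : List I → ℤ) : Prop :=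
  ∃ w : List I, f w < g w ∧ ∀ v : List I, monLt v w → f v = g v

/-- The Magnus order on the free group. -/
def magnusLt {I : Type*} [LinearOrder I] [DecidableEq I] (a b : FreeGroup I) : Prop :=
  seriesLt (magnus a) (magnus b)

/-!
Call `θ : F → ℤ⟪X⟫ˣ` a Magnus expansion if `θ(x_i) ≡ 1 + X_i` modulo terms of degree at least `2`.
Modulo terms of high degree, `θ(a)` is a noncommutative polynomial in the `θ(x_i) - 1`, and this
polynomial does not depend on `θ`. Since `θ(x_i) - 1` has leading term `X_i`, the lowest-degree part
of `θ(b) - θ(a)` does not depend on `θ` either, so every Magnus expansion induces the same order.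
The coefficients of degree at most `1` of the standard expansion `M(a)` only depend on the class of
`a` in the abelianization; hence `M ∘ Φ` is again a Magnus expansion whenever `Φ` acts trivially on
the abelianization.
-/

/-- The ring `ℤ⟪X_I⟫` of noncommutative power series, as a synonym of the type of coefficient
functions: its product is the convolution `conv` and not the pointwise product of functions. -/
def NCPowerSeries (I : Type*) : Type _ := List I → ℤ

namespace NCPowerSeries

variable {I : Type*}

section Ring

instance : AddCommGroup (NCPowerSeries I) := inferInstanceAs (AddCommGroup (List I → ℤ))

instance : Mul (NCPowerSeries I) := ⟨conv⟩

instance : One (NCPowerSeries I) := ⟨oneSeries⟩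

/-- The coefficient of the monomial `w`. -/
def coeff (w : List I) : NCPowerSeries I →+ ℤ := Pi.evalAddMonoidHom (fun _ => ℤ) w

@[ext]
theorem ext {f g : NCPowerSeries I} (h : ∀ w, coeff w f = coeff w g) : f = g := funext h

/-- The left quotient `f_j` of `f` by `X_j`, that is, the coefficient of `X_j` in the unique
decomposition `f = f_∅ + ∑ j, X_j * f_j`. It turns statements about products into inductions on
words. -/
def leftQuotient (j : I) : NCPowerSeries I →+ NCPowerSeries I where
  toFun f := fun w => f (j :: w)
  map_zero' := rfl
  map_add' _ _ := rfl

@[simp]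
theorem coeff_leftQuotient (j : I) (w : List I) (f : NCPowerSeries I) :
    coeff w (leftQuotient j f) = coeff (j :: w) f := rfl

theorem coeff_mul (w : List I) (f g : NCPowerSeries I) :
    coeff w (f * g) =
      ∑ k ∈ Finset.range (w.length + 1), coeff (w.take k) f * coeff (w.drop k) g := rfl

@[simp]
theorem coeff_nil_one : coeff [] (1 : NCPowerSeries I) = 1 := rfl

@[simp]
theorem coeff_cons_one (j : I) (w : List I) : coeff (j :: w) (1 : NCPowerSeries I) = 0 := rfl

@[simp]
theorem coeff_nil_mul (f g : NCPowerSeries I) : coeff [] (f * g) = coeff [] f * coeff [] g := by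
  simp [coeff_mul]

theorem coeff_cons_mul (j : I) (w : List I) (f g : NCPowerSeries I) :
    coeff (j :: w) (f * g) =
      coeff [] f * coeff (j :: w) g + coeff w (leftQuotient j f * g) := by
  rw [coeff_mul, List.length_cons, Finset.sum_range_succ', add_comm]
  rfl

instance : NonUnitalNonAssocRing (NCPowerSeries I) where
  left_distrib f g h := by ext w; simp [coeff_mul, mul_add, Finset.sum_add_distrib]
  right_distrib f g h := by ext w; simp [coeff_mul, add_mul, Finset.sum_add_distrib]
  zero_mul f := by ext w; simp [coeff_mul]
  mul_zero f := by ext w; simp [coeff_mul]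

@[simp]
theorem leftQuotient_one (j : I) : leftQuotient j (1 : NCPowerSeries I) = 0 := rfl

theorem leftQuotient_mul (j : I) (f g : NCPowerSeries I) :
    leftQuotient j (f * g) = coeff [] f • leftQuotient j g + leftQuotient j f * g := by
  ext w
  simp [coeff_cons_mul]

theorem coeff_mul_assoc (w : List I) (f g h : NCPowerSeries I) :
    coeff w (f * g * h) = coeff w (f * (g * h)) := by
  induction w generalizing f with
  | nil => simp [mul_assoc]
  | cons j w ih =>
    simp only [coeff_cons_mul, coeff_nil_mul, leftQuotient_mul, add_mul, smul_mul_assoc, map_add,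
      map_zsmul, smul_eq_mul, ih]
    ring

theorem coeff_mul_one (w : List I) (f : NCPowerSeries I) : coeff w (f * 1) = coeff w f := by
  induction w generalizing f with
  | nil => simp
  | cons j w ih => simp [coeff_cons_mul, ih]

instance : Ring (NCPowerSeries I) where
  __ := (inferInstance : NonUnitalNonAssocRing (NCPowerSeries I))
  mul_assoc f g h := ext fun w => coeff_mul_assoc w f g h
  one_mul f := by
    ext w
    cases w <;> simp [coeff_cons_mul]
  mul_one f := ext fun w => coeff_mul_one w f

end Ring

section Filtration

/-- The series all of whose monomials have degree at least `n`. -/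
def filtration (n : ℕ) : AddSubgroup (NCPowerSeries I) where
  carrier := {f | ∀ w : List I, w.length < n → coeff w f = 0}
  zero_mem' w _ := map_zero _
  add_mem' hf hg w hw := by rw [map_add, hf w hw, hg w hw, add_zero]
  neg_mem' hf w hw := by rw [map_neg, hf w hw, neg_zero]

theorem mem_filtration {n : ℕ} {f : NCPowerSeries I} :
    f ∈ filtration n ↔ ∀ w : List I, w.length < n → coeff w f = 0 := Iff.rfl

theorem filtration_antitone : Antitone (filtration (I := I)) :=
  fun _ _ hmn _ hf w hw => hf w (hw.trans_le hmn)

theorem mem_filtration_zero (f : NCPowerSeries I) : f ∈ filtration 0 :=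
  fun _ hw => absurd hw (Nat.not_lt_zero _)

theorem mem_filtration_one {f : NCPowerSeries I} : f ∈ filtration 1 ↔ coeff [] f = 0 := by
  simp [mem_filtration]

theorem mem_filtration_two {f : NCPowerSeries I} :
    f ∈ filtration 2 ↔ coeff [] f = 0 ∧ ∀ j, coeff [j] f = 0 := by
  refine ⟨fun hf => ⟨hf [] (by simp), fun j => hf [j] (by simp)⟩, fun ⟨h_nil, h_singleton⟩ => ?_⟩
  rintro (_ | ⟨j, _ | ⟨k, w⟩⟩) hw
  · exact h_nil
  · exact h_singleton j
  · simp at hw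

theorem mul_mem_filtration {m n : ℕ} {f g : NCPowerSeries I} (hf : f ∈ filtration m)
    (hg : g ∈ filtration n) : f * g ∈ filtration (m + n) := by
  intro w hw
  rw [coeff_mul]
  refine Finset.sum_eq_zero fun k hk_range => ?_
  have hkw : k < w.length + 1 := Finset.mem_range.mp hk_range
  by_cases hk : k < m
  · rw [hf _ (by rw [List.length_take]; omega), zero_mul]
  · rw [hg _ (by rw [List.length_drop]; omega), mul_zero]

theorem mul_mem_filtration_left (f : NCPowerSeries I) {n : ℕ} {g : NCPowerSeries I}
    (hg : g ∈ filtration n) : f * g ∈ filtration n := by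
  simpa using mul_mem_filtration (mem_filtration_zero f) hg

theorem mul_mem_filtration_right {n : ℕ} {f : NCPowerSeries I} (hf : f ∈ filtration n)
    (g : NCPowerSeries I) : f * g ∈ filtration n :=
  mul_mem_filtration hf (mem_filtration_zero g)

theorem pow_mem_filtration {f : NCPowerSeries I} (hf : f ∈ filtration 1) (n : ℕ) :
    f ^ n ∈ filtration n := by
  induction n with
  | zero => exact mem_filtration_zero _
  | succ n ih => rw [pow_succ]; exact mul_mem_filtration ih hf

end Filtration

section Variables

variable [DecidableEq I]

/-- The indeterminate `X_i`. -/
def X (i : I) : NCPowerSeries I := fun w => if w = [i] then 1 else 0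

theorem coeff_X (i : I) (w : List I) : coeff w (X i) = if w = [i] then 1 else 0 := rfl

theorem X_mem_filtration (i : I) : X i ∈ filtration 1 := by
  rw [mem_filtration_one]; simp [coeff_X]

theorem leftQuotient_X (i j : I) : leftQuotient j (X i) = if j = i then 1 else 0 := by
  ext w
  by_cases hji : j = i <;> cases w <;> simp [coeff_X, hji]

theorem coeff_cons_X_mul (i j : I) (w : List I) (f : NCPowerSeries I) :
    coeff (j :: w) (X i * f) = if j = i then coeff w f else 0 := by
  rw [coeff_cons_mul, leftQuotient_X]
  split_ifs <;> simp [coeff_X]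

/-- The geometric series `1 - X_i + X_i² - ⋯`. -/
def invOneAddX (i : I) : NCPowerSeries I := invGenSeries i

theorem leftQuotient_invOneAddX (i j : I) :
    leftQuotient j (invOneAddX i) = if j = i then -invOneAddX i else 0 := by
  ext w
  change invGenSeries i (j :: w) = _
  split_ifs with hji
  · change _ = -invGenSeries i w
    simp only [invGenSeries, hji, List.length_cons, List.replicate_succ, List.cons.injEq, true_and]
    split_ifs <;> simp [pow_succ]
  · simp [invGenSeries, List.replicate_succ, hji]

theorem coeff_nil_invOneAddX (i : I) : coeff [] (invOneAddX i) = 1 := rfl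

theorem one_add_X_mul_invOneAddX (i : I) : (1 + X i) * invOneAddX i = 1 := by
  ext w
  rw [add_mul, one_mul, map_add]
  cases w with
  | nil => simp [coeff_X, coeff_nil_invOneAddX]
  | cons j w =>
    rw [coeff_cons_X_mul, ← coeff_leftQuotient, leftQuotient_invOneAddX]
    split_ifs <;> simp

theorem invOneAddX_mul_one_add_X (i : I) : invOneAddX i * (1 + X i) = 1 := by
  ext w
  induction w with
  | nil => simp [coeff_X, coeff_nil_invOneAddX]
  | cons j w ih =>
    rw [coeff_cons_mul, coeff_nil_invOneAddX, one_mul, leftQuotient_invOneAddX,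
      ← coeff_leftQuotient, map_add, leftQuotient_one, zero_add, leftQuotient_X]
    split_ifs <;> simp [ih]

/-- `1 + X_i` as a unit of the power series ring. -/
def oneAddXUnit (i : I) : (NCPowerSeries I)ˣ where
  val := 1 + X i
  inv := invOneAddX i
  val_inv := one_add_X_mul_invOneAddX i
  inv_val := invOneAddX_mul_one_add_X i

theorem one_add_X_eq_genSeries (i : I) : 1 + X i = genSeries i := by
  ext w
  change coeff w 1 + coeff w (X i) = if w = [] ∨ w = [i] then 1 else 0
  cases w <;> simp [coeff_X]

end Variables

section Evaluation

/-- Evaluation of noncommutative polynomials at a family of power series. -/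
noncomputable def eval (y : I → NCPowerSeries I) :
    MonoidAlgebra ℤ (FreeMonoid I) →ₐ[ℤ] NCPowerSeries I :=
  MonoidAlgebra.lift ℤ _ _ (FreeMonoid.lift y)

theorem eval_apply (y : I → NCPowerSeries I) (p : MonoidAlgebra ℤ (FreeMonoid I)) :
    eval y p = p.coeff.sum fun w c => c • FreeMonoid.lift y w := MonoidAlgebra.lift_apply _ _

theorem eval_single_of (y : I → NCPowerSeries I) (i : I) :
    eval y (MonoidAlgebra.single (FreeMonoid.of i) 1) = y i := by
  simp [eval]

theorem lift_mem_filtration {y : I → NCPowerSeries I} (hy : ∀ i, y i ∈ filtration 1)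
    (w : FreeMonoid I) : FreeMonoid.lift y w ∈ filtration w.length := by
  induction w using FreeMonoid.inductionOn' with
  | one => exact mem_filtration_zero _
  | of_mul i w ih =>
    rw [map_mul, FreeMonoid.lift_eval_of, FreeMonoid.length_mul, FreeMonoid.length_of]
    exact mul_mem_filtration (hy i) ih

variable [DecidableEq I]

theorem coeff_lift_X (v : List I) (w : FreeMonoid I) :
    coeff v (FreeMonoid.lift X w) = if FreeMonoid.toList w = v then 1 else 0 := by
  induction w using FreeMonoid.inductionOn' generalizing v with
  | one => cases v <;> simp
  | of_mul i w ih =>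
    rw [map_mul, FreeMonoid.lift_eval_of]
    cases v with
    | nil => simp [coeff_X]
    | cons j v =>
      rw [coeff_cons_X_mul, ih, FreeMonoid.toList_of_mul]
      split_ifs <;> simp_all

theorem coeff_eval_X (v : List I) (p : MonoidAlgebra ℤ (FreeMonoid I)) :
    coeff v (eval X p) = p.coeff (FreeMonoid.ofList v) := by
  simp only [eval_apply, Finsupp.sum, map_sum, map_zsmul, coeff_lift_X]
  rw [Finset.sum_eq_single (FreeMonoid.ofList v)]
  · simp
  · intro w _ hwv
    rw [if_neg fun h => hwv ((Equiv.eq_symm_apply FreeMonoid.toList).mpr h), smul_zero]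
  · intro hv
    rw [Finsupp.notMem_support_iff.mp hv, zero_smul]

theorem lift_sub_lift_X_mem_filtration {y : I → NCPowerSeries I}
    (hy : ∀ i, y i - X i ∈ filtration 2) (w : FreeMonoid I) :
    FreeMonoid.lift y w - FreeMonoid.lift X w ∈ filtration (w.length + 1) := by
  induction w using FreeMonoid.inductionOn' with
  | one => simp
  | of_mul i w ih =>
    have hyi : y i ∈ filtration 1 := by
      simpa using add_mem (filtration_antitone one_le_two (hy i)) (X_mem_filtration i)
    have telescope : y i * FreeMonoid.lift y w - X i * FreeMonoid.lift X w =
        y i * (FreeMonoid.lift y w - FreeMonoid.lift X w) + (y i - X i) * FreeMonoid.lift X w := by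
      noncomm_ring
    simp only [map_mul, FreeMonoid.lift_eval_of, FreeMonoid.length_mul, FreeMonoid.length_of]
    rw [telescope]
    refine add_mem ?_ ?_
    · simpa only [add_assoc] using mul_mem_filtration hyi ih
    · convert mul_mem_filtration (hy i) (lift_mem_filtration X_mem_filtration w) using 2
      omega

theorem eval_sub_eval_X_mem_filtration {y : I → NCPowerSeries I}
    (hy : ∀ i, y i - X i ∈ filtration 2) {n : ℕ} {p : MonoidAlgebra ℤ (FreeMonoid I)}
    (hp : eval X p ∈ filtration n) : eval y p - eval X p ∈ filtration (n + 1) := by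
  simp only [eval_apply, Finsupp.sum]
  rw [← Finset.sum_sub_distrib]
  refine sum_mem fun w hw => ?_
  have hnw : n ≤ w.length := by
    by_contra! hlt
    exact Finsupp.mem_support_iff.mp hw (coeff_eval_X w.toList p ▸ hp w.toList hlt)
  rw [← smul_sub]
  exact zsmul_mem (filtration_antitone (by omega) (lift_sub_lift_X_mem_filtration hy w)) _

end Evaluation

section Expansions

/-- `θ` is a (generalised) Magnus expansion: it agrees with the standard one on the generators up to
terms of degree at least `2`. -/
def IsMagnusExpansion [DecidableEq I] (θ : FreeGroup I →* NCPowerSeries I) : Prop :=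
  ∀ i, θ (FreeGroup.of i) - (1 + X i) ∈ filtration 2

theorem coeff_nil_eq_one {θ : FreeGroup I →* NCPowerSeries I}
    (hθ : ∀ i, θ (FreeGroup.of i) - 1 ∈ filtration 1) (a : FreeGroup I) :
    coeff [] (θ a) = 1 := by
  induction a using FreeGroup.induction_on with
  | C1 => simp
  | of i => simpa [mem_filtration_one, sub_eq_zero] using hθ i
  | inv_of i ih =>
    have h : coeff [] (θ (FreeGroup.of i)⁻¹ * θ (FreeGroup.of i)) = 1 := by
      rw [← map_mul, inv_mul_cancel, map_one, coeff_nil_one]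
    rwa [coeff_nil_mul, ih, mul_one] at h
  | mul a b iha ihb => rw [map_mul, coeff_nil_mul, iha, ihb, one_mul]

/-- The coefficient of `X_j` in `θ g` as a homomorphism to the additive group `ℤ`, hence factoring
through the abelianization. Additivity needs the constant terms to be `1`. -/
def linearCoeff {G : Type*} [Group G] (θ : G →* NCPowerSeries I) (hθ : ∀ g, coeff [] (θ g) = 1)
    (j : I) : G →* Multiplicative ℤ where
  toFun g := Multiplicative.ofAdd (coeff [j] (θ g))
  map_one' := by simp
  map_mul' g h := by
    rw [← ofAdd_add, map_mul, coeff_cons_mul, coeff_nil_mul, coeff_leftQuotient, hθ, hθ, one_mul,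
      mul_one, add_comm]

theorem sub_mem_filtration_two_of_abelianization_eq {G : Type*} [Group G]
    (θ : G →* NCPowerSeries I) (hθ : ∀ g, coeff [] (θ g) = 1) {g h : G}
    (hgh : Abelianization.of g = Abelianization.of h) : θ g - θ h ∈ filtration 2 := by
  refine mem_filtration_two.mpr ⟨by rw [map_sub, hθ, hθ, sub_self], fun j => ?_⟩
  have h_lift := congrArg (Abelianization.lift (linearCoeff θ hθ j)) hgh
  simp only [Abelianization.lift_apply_of] at h_lift
  rw [map_sub, sub_eq_zero]
  exact Multiplicative.ofAdd.injective h_lift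

theorem exists_sub_eval_mem_filtration (a : FreeGroup I) (N : ℕ) :
    ∃ p : MonoidAlgebra ℤ (FreeMonoid I), ∀ θ : FreeGroup I →* NCPowerSeries I,
      (∀ i, θ (FreeGroup.of i) - 1 ∈ filtration 1) →
        θ a - eval (fun i => θ (FreeGroup.of i) - 1) p ∈ filtration N := by
  induction a using FreeGroup.induction_on with
  | C1 => exact ⟨1, fun θ _ => by simp⟩
  | of i =>
    refine ⟨1 + MonoidAlgebra.single (FreeMonoid.of i) 1, fun θ _ => ?_⟩
    simp [eval_single_of]
  | inv_of i =>
    refine ⟨∑ k ∈ Finset.range N, (-MonoidAlgebra.single (FreeMonoid.of i) 1) ^ k, fun θ hθ => ?_⟩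
    simp only [map_sum, map_pow, map_neg, eval_single_of, neg_sub]
    set x := θ (FreeGroup.of i)
    have hinv : θ (FreeGroup.of i)⁻¹ * x = 1 := by rw [← map_mul, inv_mul_cancel, map_one]
    have hgeom : x * ∑ k ∈ Finset.range N, (1 - x) ^ k = 1 - (1 - x) ^ N := by
      simpa using mul_neg_geom_sum (1 - x) N
    have remainder : θ (FreeGroup.of i)⁻¹ - ∑ k ∈ Finset.range N, (1 - x) ^ k =
        θ (FreeGroup.of i)⁻¹ * (1 - x) ^ N := by
      rw [eq_comm, ← sub_sub_self 1 ((1 - x) ^ N), ← hgeom, mul_sub, mul_one, ← mul_assoc, hinv,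
        one_mul]
    rw [remainder]
    have hx : 1 - x ∈ filtration 1 := by simpa using neg_mem (hθ i)
    exact mul_mem_filtration_left _ (pow_mem_filtration hx N)
  | mul a b iha ihb =>
    obtain ⟨p, hp⟩ := iha
    obtain ⟨q, hq⟩ := ihb
    refine ⟨p * q, fun θ hθ => ?_⟩
    set y := fun i => θ (FreeGroup.of i) - 1
    have telescope : θ a * θ b - eval y p * eval y q =
        (θ a - eval y p) * θ b + eval y p * (θ b - eval y q) := by
      noncomm_ring
    rw [map_mul, map_mul, telescope]
    exact add_mem (mul_mem_filtration_right (hp θ hθ) _) (mul_mem_filtration_left _ (hq θ hθ))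

variable [DecidableEq I]

/-- The standard Magnus expansion `x_i ↦ 1 + X_i`. -/
def magnusHom : FreeGroup I →* NCPowerSeries I :=
  (Units.coeHom _).comp (FreeGroup.lift oneAddXUnit)

theorem magnusHom_of (i : I) : magnusHom (FreeGroup.of i) = 1 + X i := by
  simp [magnusHom, oneAddXUnit]

theorem magnusHom_mk (L : List (I × Bool)) :
    magnusHom (FreeGroup.mk L) = (L.map letterSeries).foldr conv oneSeries := by
  induction L with
  | nil => rfl
  | cons p L ih =>
    rw [List.map_cons, List.foldr_cons, ← ih]
    obtain ⟨i, _ | _⟩ := p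
    · rfl
    · change (1 + X i) * _ = conv (genSeries i) _
      rw [one_add_X_eq_genSeries]
      rfl

theorem magnusHom_eq_magnus (a : FreeGroup I) : magnusHom a = magnus a := by
  rw [magnus, ← magnusHom_mk, FreeGroup.mk_toWord]

theorem isMagnusExpansion_magnusHom : IsMagnusExpansion (magnusHom (I := I)) := fun i => by
  rw [magnusHom_of, sub_self]
  exact zero_mem _

namespace IsMagnusExpansion

variable {θ : FreeGroup I →* NCPowerSeries I}

theorem sub_one_sub_X_mem (hθ : IsMagnusExpansion θ) (i : I) :
    θ (FreeGroup.of i) - 1 - X i ∈ filtration 2 := by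
  simpa only [sub_sub] using hθ i

theorem sub_one_mem (hθ : IsMagnusExpansion θ) (i : I) :
    θ (FreeGroup.of i) - 1 ∈ filtration 1 := by
  simpa using add_mem (filtration_antitone one_le_two (hθ.sub_one_sub_X_mem i)) (X_mem_filtration i)

theorem comp (hθ : IsMagnusExpansion θ) {Φ : FreeGroup I →* FreeGroup I}
    (hΦ : ∀ x, Abelianization.of (Φ x) = Abelianization.of x) :
    IsMagnusExpansion (θ.comp Φ) := fun i => by
  simpa using add_mem
    (sub_mem_filtration_two_of_abelianization_eq θ (coeff_nil_eq_one hθ.sub_one_mem)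
      (hΦ (FreeGroup.of i))) (hθ i)

theorem sub_sub_magnusHom_sub_mem (hθ : IsMagnusExpansion θ) {a b : FreeGroup I} {n : ℕ}
    (hab : magnusHom b - magnusHom a ∈ filtration n) :
    θ b - θ a - (magnusHom b - magnusHom a) ∈ filtration (n + 1) := by
  obtain ⟨p, hp⟩ := exists_sub_eval_mem_filtration a (n + 1)
  obtain ⟨q, hq⟩ := exists_sub_eval_mem_filtration b (n + 1)
  have approx {η : FreeGroup I →* NCPowerSeries I} (hη : IsMagnusExpansion η) :
      η b - η a - eval (fun i => η (FreeGroup.of i) - 1) (q - p) ∈ filtration (n + 1) := by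
    rw [map_sub, sub_sub_sub_comm]
    exact sub_mem (hq η hη.sub_one_mem) (hp η hη.sub_one_mem)
  have approx_magnusHom :
      magnusHom b - magnusHom a - eval X (q - p) ∈ filtration (n + 1) := by
    simpa only [magnusHom_of, add_sub_cancel_left] using approx isMagnusExpansion_magnusHom
  have h_eval_X : eval X (q - p) ∈ filtration n := by
    simpa using sub_mem hab (filtration_antitone n.le_succ approx_magnusHom)
  have h_eval := eval_sub_eval_X_mem_filtration hθ.sub_one_sub_X_mem h_eval_X
  simpa using sub_mem (add_mem (approx hθ) h_eval) approx_magnusHom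

end IsMagnusExpansion

end Expansions

section Order

variable [LinearOrder I]

theorem seriesLt_of_sub_sub_mem_filtration {f g f' g' : NCPowerSeries I} (hfg : seriesLt f g)
    (h : ∀ n, g - f ∈ filtration n → g' - f' - (g - f) ∈ filtration (n + 1)) :
    seriesLt f' g' := by
  obtain ⟨w, hw, hlow⟩ := hfg
  have hmem : g - f ∈ filtration w.length := fun v hv =>
    sub_eq_zero.mpr (hlow v (Or.inl hv)).symm
  have key (v : List I) (hv : v.length ≤ w.length) : g' v - f' v = g v - f v :=
    sub_eq_zero.mp (h _ hmem v (Nat.lt_succ_of_le hv))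
  refine ⟨w, by linarith [key w le_rfl], fun v hv => ?_⟩
  have hlen : v.length ≤ w.length := hv.elim le_of_lt fun hv => hv.1.le
  linarith [key v hlen, hlow v hv]

theorem IsMagnusExpansion.seriesLt_of_magnusLt [DecidableEq I]
    {θ : FreeGroup I →* NCPowerSeries I} (hθ : IsMagnusExpansion θ) {a b : FreeGroup I}
    (hab : magnusLt a b) : seriesLt (θ a) (θ b) := by
  rw [magnusLt, ← magnusHom_eq_magnus, ← magnusHom_eq_magnus] at hab
  exact seriesLt_of_sub_sub_mem_filtration hab fun _ => hθ.sub_sub_magnusHom_sub_mem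

end Order

end NCPowerSeries

open NCPowerSeries in
theorem magnusOrder_preserved_by_IA_automorphism_general {I : Type*} [LinearOrder I]
    [DecidableEq I] (Φ : FreeGroup I →* FreeGroup I)
    (hΦ : ∀ x : FreeGroup I, Abelianization.of (Φ x) = Abelianization.of x) (a b : FreeGroup I)
    (hab : magnusLt a b) : magnusLt (Φ a) (Φ b) := by
  have h := (isMagnusExpansion_magnusHom.comp hΦ).seriesLt_of_magnusLt hab
  rwa [MonoidHom.comp_apply, MonoidHom.comp_apply, magnusHom_eq_magnus, magnusHom_eq_magnus] at h

theorem magnusOrder_preserved_by_IA_automorphism {I : Type*} [LinearOrder I] [DecidableEq I]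
    (Φ : FreeGroup I ≃* FreeGroup I)
    (hΦ : ∀ x : FreeGroup I, Abelianization.of (Φ x) = Abelianization.of x) :
    ∀ a b : FreeGroup I, magnusLt a b → magnusLt (Φ a) (Φ b) :=
  magnusOrder_preserved_by_IA_automorphism_general Φ.toMonoidHom hΦ
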